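/- arXiv:1908.08627 — 3 statements merged into one kernel-verified Lean document; each statement's English description precedes it below -/
import Mathlib

section
/- Let G be a paratopological group. Then G is simply sm-factorizable if and only if for each continuous function f : G → ℝ one can find a regular strongly submetrizable paratopological group H, a continuous surjective homomorphism π : G → H, and a continuous function g : H → ℝ such that f = g ∘ π. -/
open Topology TopologicalSpace Pointwise Function Set

def IsCozero {X : Type*} [TopologicalSpace X] (U : Set X) : Prop :=
  ∃ f : X → ℝ, Continuous f ∧ U = f ⁻¹' {x : ℝ | x ≠ 0}

/-- A paratopological group is simply sm-factorizable if every cozero set is saturated with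
respect to some continuous surjective homomorphism onto a separable metrizable paratopological group. -/
def SimplySMFactorizablePara (G : Type*) [Group G] [TopologicalSpace G] : Prop :=
  ∀ U : Set G, IsCozero U →
    ∃ (H : Type) (gH : Group H) (tH : TopologicalSpace H),
      letI := gH
      letI := tH
      ContinuousMul H ∧ SeparableSpace H ∧ MetrizableSpace H ∧
        ∃ π : G →* H, Continuous π ∧ Surjective π ∧ ⇑π ⁻¹' (⇑π '' U) = U

/-- A paratopological group is strongly submetrizable if it admits a continuous bijective
homomorphism onto a separable metrizable paratopological group. -/
def StronglySubmetrizablePara (H : Type*) [Group H] [TopologicalSpace H] : Prop :=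
  ∃ (K : Type) (gK : Group K) (tK : TopologicalSpace K),
    letI := gK
    letI := tK
    ContinuousMul K ∧ SeparableSpace K ∧ MetrizableSpace K ∧
      ∃ i : H →* K, Continuous i ∧ Bijective i

theorem aux_closure_mul {K : Type*} [Group K] [TopologicalSpace K] [ContinuousMul K]
    {A V W : Set K} (hV : IsOpen V) (h1 : (1 : K) ∈ V) (h : A * V ⊆ W) :
    closure A ⊆ interior (closure W) := by
  intro z hz
  refine mem_interior.2 ⟨(fun v => z * v) '' V, ?_, (Homeomorph.mulLeft z).isOpenMap V hV, 1, h1, mul_one z⟩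
  rintro _ ⟨v, hv, rfl⟩
  exact map_mem_closure (f := fun a => a * v) (continuous_mul_const v) hz
    (fun a ha => h (Set.mul_mem_mul ha hv))

/-- The semiregularization of a topology. -/
def srTop {K : Type*} (t : TopologicalSpace K) : TopologicalSpace K where
  IsOpen s := ∀ x ∈ s, ∃ W : Set K, IsOpen W ∧ x ∈ W ∧ interior (closure W) ⊆ s
  isOpen_univ := fun x _ => ⟨univ, isOpen_univ, mem_univ x, subset_univ _⟩
  isOpen_inter := by
    rintro s u hs hu x ⟨hxs, hxu⟩
    obtain ⟨A, hA, hxA, hAs⟩ := hs x hxs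
    obtain ⟨B, hB, hxB, hBu⟩ := hu x hxu
    refine ⟨A ∩ B, hA.inter hB, ⟨hxA, hxB⟩, subset_inter ?_ ?_⟩
    · exact (interior_mono (closure_mono inter_subset_left)).trans hAs
    · exact (interior_mono (closure_mono inter_subset_right)).trans hBu
  isOpen_sUnion := by
    rintro S hS x ⟨s, hs, hxs⟩
    obtain ⟨A, hA, hxA, hAs⟩ := hS s hs x hxs
    exact ⟨A, hA, hxA, hAs.trans (subset_sUnion_of_mem hs)⟩

theorem srTop_isOpen {K : Type*} (t : TopologicalSpace K) (W : Set K) :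
    IsOpen[srTop t] (interior (closure W)) := by
  intro x hx
  refine ⟨interior (closure W), isOpen_interior, hx, ?_⟩
  exact interior_mono (closure_minimal interior_subset isClosed_closure)

theorem srTop_isClosed {K : Type*} (t : TopologicalSpace K) {A : Set K} (hA : IsOpen A) :
    IsClosed[srTop t] (closure A) := by
  refine (@isOpen_compl_iff K _ (srTop t)).1 (fun x hx => ⟨(closure A)ᶜ, isClosed_closure.isOpen_compl, hx, ?_⟩)
  have h1 : Disjoint (closure A)ᶜ A :=
    Set.disjoint_left.2 (fun y hy hyA => hy (subset_closure hyA))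
  have h2 : Disjoint (interior (closure (closure A)ᶜ)) A :=
    (h1.closure_left hA).mono_left interior_subset
  exact (h2.closure_right isOpen_interior).subset_compl_right

theorem srTop_mem_nhds {K : Type*} (t : TopologicalSpace K) {s : Set K} {x : K} :
    s ∈ @nhds K (srTop t) x ↔ ∃ W : Set K, IsOpen W ∧ x ∈ W ∧ interior (closure W) ⊆ s := by
  constructor
  · intro h
    obtain ⟨u, hus, hu, hxu⟩ := (@mem_nhds_iff K (srTop t) x s).1 h
    obtain ⟨W, hW, hx, hWu⟩ := hu x hxu
    exact ⟨W, hW, hx, hWu.trans hus⟩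
  · rintro ⟨W, hW, hx, hWs⟩
    exact (@mem_nhds_iff K (srTop t) x s).2
      ⟨_, hWs, srTop_isOpen t W, hW.subset_interior_closure hx⟩

theorem srTop_continuous {K Y : Type*} (t : TopologicalSpace K) [TopologicalSpace Y]
    [RegularSpace Y] {f : K → Y} (hf : Continuous f) : @Continuous K Y (srTop t) _ f := by
  refine (@continuous_iff_continuousAt K Y (srTop t) _ f).2 (fun x s hs => ?_)
  obtain ⟨c, hc, hcc, hcs⟩ := exists_mem_nhds_isClosed_subset hs
  refine (srTop_mem_nhds t).2 ⟨f ⁻¹' (interior c), isOpen_interior.preimage hf,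
    mem_interior_iff_mem_nhds.2 hc, ?_⟩
  refine interior_subset.trans ((closure_minimal (preimage_mono interior_subset)
    (hcc.preimage hf)).trans (preimage_mono hcs))

theorem srTop_le {K : Type*} (t : TopologicalSpace K) : t ≤ srTop t := by
  intro s hs
  refine isOpen_iff_mem_nhds.2 (fun x hx => ?_)
  obtain ⟨W, hW, hxW, h⟩ := hs x hx
  exact Filter.mem_of_superset (hW.mem_nhds hxW) (hW.subset_interior_closure.trans h)

theorem srTop_regular {K : Type*} [Group K] (t : TopologicalSpace K) [ContinuousMul K] :
    @RegularSpace K (srTop t) := by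
  refine @RegularSpace.of_exists_mem_nhds_isClosed_subset K (srTop t) (fun x s hs => ?_)
  obtain ⟨W, hW, hxW, h⟩ := (srTop_mem_nhds t).1 hs
  have hm : W ∈ 𝓝 (x * 1) := by rw [mul_one]; exact hW.mem_nhds hxW
  obtain ⟨A, hA, hxA, V, hV, h1, hAV⟩ : ∃ A : Set K, IsOpen A ∧ x ∈ A ∧
      ∃ V : Set K, IsOpen V ∧ (1 : K) ∈ V ∧ A * V ⊆ W := by
    have := (continuous_mul (M := K)).continuousAt (x := (x, 1)) hm
    obtain ⟨A, V, hA, hx, hV, h1, hs⟩ := mem_nhds_prod_iff'.1 this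
    exact ⟨A, hA, hx, V, hV, h1, Set.mul_subset_iff.2 (fun a ha b hb => hs (show (a, b) ∈ A ×ˢ V from ⟨ha, hb⟩))⟩
  exact ⟨closure A, (srTop_mem_nhds t).2 ⟨A, hA, hxA, interior_subset⟩, srTop_isClosed t hA,
    (aux_closure_mul hV h1 hAV).trans h⟩

theorem srTop_continuousMul {K : Type*} [Group K] (t : TopologicalSpace K) [ContinuousMul K] :
    @ContinuousMul K (srTop t) _ := by
  refine @ContinuousMul.mk K (srTop t) _ ?_
  refine (@continuous_iff_continuousAt (K × K) K (@instTopologicalSpaceProd K K (srTop t) (srTop t))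
    (srTop t) _).2 ?_
  rintro ⟨x, y⟩ s hs
  obtain ⟨W, hW, hxW, h⟩ := (srTop_mem_nhds t).1 hs
  have hm : W ∈ 𝓝 (x * y * 1) := by rw [mul_one]; exact hW.mem_nhds hxW
  have h3 : Continuous (fun p : (K × K) × K => p.1.1 * p.1.2 * p.2) := by fun_prop
  obtain ⟨P, V, hP, hxP, hV, h1, hs1⟩ := mem_nhds_prod_iff'.1
    (h3.continuousAt (x := ((x, y), 1)) hm)
  obtain ⟨A, B, hA, hxA, hB, hyB, hs2⟩ := mem_nhds_prod_iff'.1 (hP.mem_nhds hxP)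
  have key : closure (A * B) ⊆ interior (closure W) := by
    refine aux_closure_mul hV h1 ?_
    rintro _ ⟨_, ⟨a, ha, b, hb, rfl⟩, v, hv, rfl⟩
    exact hs1 (show ((a, b), v) ∈ P ×ˢ V from ⟨hs2 ⟨ha, hb⟩, hv⟩)
  refine (@mem_nhds_prod_iff K K (srTop t) (srTop t) x y _).2 ⟨interior (closure A),
    (srTop_mem_nhds t).2 ⟨A, hA, hxA, subset_rfl⟩, interior (closure B),
    (srTop_mem_nhds t).2 ⟨B, hB, hyB, subset_rfl⟩, ?_⟩
  rintro ⟨a, b⟩ ⟨ha, hb⟩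
  refine h (key ?_)
  exact map_mem_closure₂ continuous_mul (interior_subset ha) (interior_subset hb)
    (fun a ha b hb => Set.mul_mem_mul ha hb)

theorem coinduced_continuousMul {G K : Type*} [Group G] [tG : TopologicalSpace G]
    [ContinuousMul G] [Group K] (φ : G →* K) (hs : Surjective φ) :
    @ContinuousMul K (tG.coinduced φ) _ := by
  letI : TopologicalSpace K := tG.coinduced φ
  have hc : Continuous φ := continuous_coinduced_rng
  have ho : IsOpenMap φ := by
    intro U hU
    refine isOpen_coinduced.2 ?_
    have : φ ⁻¹' (φ '' U) = ⋃ n ∈ φ.ker, (fun g => g * n) ⁻¹' U := by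
      ext g
      simp only [mem_preimage, mem_image, mem_iUnion, MonoidHom.mem_ker, exists_prop]
      constructor
      · rintro ⟨u, hu, h⟩
        exact ⟨g⁻¹ * u, by simp [h], by simpa using hu⟩
      · rintro ⟨n, hn, h⟩
        exact ⟨g * n, h, by simp [hn]⟩
    rw [this]
    exact isOpen_biUnion (fun n _ => hU.preimage (continuous_mul_const n))
  have hq : IsOpenQuotientMap φ := ⟨hs, hc, ho⟩
  refine ⟨((hq.prodMap hq).isQuotientMap.continuous_iff).2 ?_⟩
  have : (fun p : K × K => p.1 * p.2) ∘ Prod.map φ φ = φ ∘ (fun p : G × G => p.1 * p.2) := by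
    ext p; simp
  rw [this]
  exact hc.comp continuous_mul

theorem factor_aux {G : Type*} {K : Type} [Group G] [tG : TopologicalSpace G] [ContinuousMul G]
    [gK : Group K] [tK : TopologicalSpace K] [ContinuousMul K] [SeparableSpace K]
    [MetrizableSpace K] (φ : G →* K) (hc : Continuous φ) (hs : Surjective φ)
    (f : G → ℝ) (hf : Continuous f) (g : K → ℝ) (hg : f = g ∘ φ) :
    ∃ (H : Type) (gH : Group H) (tH : TopologicalSpace H),
          letI := gH
          letI := tH
          ContinuousMul H ∧ T1Space H ∧ RegularSpace H ∧ StronglySubmetrizablePara H ∧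
            ∃ π : G →* H, Continuous π ∧ Surjective π ∧
              ∃ g : H → ℝ, Continuous g ∧ f = g ∘ π := by
  have hmul := coinduced_continuousMul φ hs
  have hid : @Continuous K K (srTop (tG.coinduced φ)) tK id :=
    @srTop_continuous K K (tG.coinduced φ) tK _ id (continuous_coinduced_dom.2 hc)
  refine ⟨K, gK, srTop (tG.coinduced φ), @srTop_continuousMul K gK _ hmul, ?_,
    @srTop_regular K gK _ hmul,
    ⟨K, gK, tK, inferInstance, inferInstance, inferInstance, MonoidHom.id K, hid, bijective_id⟩,
    φ, ?_, hs, g, ?_, hg⟩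
  · exact t1Space_antitone (continuous_id_iff_le.1 hid) inferInstance
  · exact continuous_iff_coinduced_le.2 (srTop_le _)
  · refine @srTop_continuous K ℝ (tG.coinduced φ) _ _ g (continuous_coinduced_dom.2 ?_)
    rw [← hg]; exact hf

/-- A paratopological group is simply sm-factorizable iff every continuous real-valued function
factors through a continuous surjective homomorphism onto a regular strongly submetrizable
paratopological group. -/
theorem statement1 (G : Type*) [Group G] [TopologicalSpace G] [ContinuousMul G] :
    SimplySMFactorizablePara G ↔
      ∀ f : G → ℝ, Continuous f →
        ∃ (H : Type) (gH : Group H) (tH : TopologicalSpace H),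
          letI := gH
          letI := tH
          ContinuousMul H ∧ T1Space H ∧ RegularSpace H ∧ StronglySubmetrizablePara H ∧
            ∃ π : G →* H, Continuous π ∧ Surjective π ∧
              ∃ g : H → ℝ, Continuous g ∧ f = g ∘ π := by
  constructor
  · intro hG f hf
    have hU : ∀ q : ℚ, IsCozero {x : G | f x < q} := fun q =>
      ⟨fun x => max ((q : ℝ) - f x) 0, by fun_prop, by
        ext x
        simp [sub_nonpos]⟩
    choose H gH tH hmul hsep hmet π hπc hπs hπ using fun q => hG _ (hU q)
    have hmul' : ∀ q, ContinuousMul (H q) := hmul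
    let Φ : G →* (∀ q, H q) := MonoidHom.pi π
    have hΦ : Continuous Φ := continuous_pi hπc
    have hsc : ∀ q, SecondCountableTopology (H q) := fun q => by
      letI := metrizableSpaceMetric (H q)
      exact UniformSpace.secondCountable_of_separable (H q)
    have hfac : ∀ x y, Φ x = Φ y → f x ≤ f y := by
      intro x y hxy
      by_contra! hlt
      obtain ⟨q, hq1, hq2⟩ := exists_rat_btwn hlt
      have hx : x ∈ π q ⁻¹' (π q '' {x : G | f x < q}) := ⟨y, hq1, (congrFun hxy q).symm⟩
      rw [hπ q] at hx
      exact lt_asymm hq2 hx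
    have hs := Φ.rangeRestrict_surjective
    have i1 : ContinuousMul (∀ q, H q) := Pi.continuousMul
    have i2 : SecondCountableTopology (∀ q, H q) := inferInstance
    have i3 : SecondCountableTopology Φ.range :=
      Topology.IsInducing.subtypeVal.secondCountableTopology
    have i4 : ContinuousMul Φ.range := Φ.range.toSubmonoid.continuousMul
    have i5 : MetrizableSpace Φ.range := metrizableSpace_of_t3_secondCountable _
    refine factor_aux Φ.rangeRestrict (hΦ.subtype_mk _) hs f hf (fun k => f (surjInv hs k)) ?_
    ext x
    have h := congrArg Subtype.val (surjInv_eq hs (Φ.rangeRestrict x))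
    exact le_antisymm (hfac _ _ h.symm) (hfac _ _ h)
  · rintro h U ⟨f, hf, rfl⟩
    obtain ⟨H, gH, tH, -, -, -, ⟨K, gK, tK, hm, hsep, hmet, i, hi, hib⟩, π, hπ, hπs, g, hg, rfl⟩ :=
      h f hf
    refine ⟨K, gK, tK, hm, hsep, hmet, i.comp π, hi.comp hπ, hib.2.comp hπs, ?_⟩
    refine Subset.antisymm ?_ (subset_preimage_image _ _)
    rintro x ⟨y, hy, hxy⟩
    have : π y = π x := hib.1 hxy
    simpa [this] using hy
end

section
/- Every totally ω-narrow weakly Lindelöf paratopological group G is simply sm-factorizable. -/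
open Topology TopologicalSpace Pointwise Function Set

/-- A space is weakly Lindelöf if every open cover has a countable subfamily with dense union. -/
def WeaklyLindelof (X : Type*) [TopologicalSpace X] : Prop :=
  ∀ 𝒰 : Set (Set X), (∀ U ∈ 𝒰, IsOpen U) → ⋃₀ 𝒰 = Set.univ →
    ∃ 𝒱 ⊆ 𝒰, 𝒱.Countable ∧ Dense (⋃₀ 𝒱)

/-- A (para)topological group is ω-narrow if each neighborhood of the identity translates
over a countable set to cover the group. -/
def OmegaNarrow (G : Type*) [Group G] [TopologicalSpace G] : Prop :=
  ∀ U ∈ 𝓝 (1 : G), ∃ A : Set G, A.Countable ∧ A * U = Set.univ ∧ U * A = Set.univ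

/-- The conjugate topology τ⁻¹ = {U⁻¹ : U ∈ τ}: the topology induced by the inversion map. -/
def conjTop (G : Type*) [Group G] (τ : TopologicalSpace G) : TopologicalSpace G :=
  TopologicalSpace.induced (fun x : G => x⁻¹) τ

structure GoodF {G : Type*} [Group G] (F : Filter G) : Prop where
  one : ∀ V ∈ F, (1 : G) ∈ V
  mul : ∀ V ∈ F, ∃ W ∈ F, ∀ a ∈ W, ∀ b ∈ W, a * b ∈ V
  conj : ∀ x : G, ∀ V ∈ F, {w | x * w * x⁻¹ ∈ V} ∈ F

/-- topology from a good filter -/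
def topF {G : Type*} [Group G] (F : Filter G) : TopologicalSpace G :=
  TopologicalSpace.mkOfNhds (fun x => Filter.map (fun w => x * w) F)

theorem nhds_topF {G : Type*} [Group G] {F : Filter G} (h : GoodF F) (x : G) :
    @nhds G (topF F) x = Filter.map (fun w => x * w) F := by
  unfold topF
  rw [TopologicalSpace.nhds_mkOfNhds]
  · intro a s hs
    have h1 := h.one _ (Filter.mem_map.1 hs)
    simpa using h1
  · intro a s hs
    obtain ⟨W, hW, hWW⟩ := h.mul _ (Filter.mem_map.1 hs)
    refine Filter.mem_map.2 (Filter.mem_of_superset hW ?_)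
    intro w hw
    refine Filter.mem_map.2 (Filter.mem_of_superset hW ?_)
    intro v hv
    have := hWW w hw v hv
    simpa [mul_assoc] using this

theorem mem_nhds_topF {G : Type*} [Group G] {F : Filter G} (h : GoodF F) (x : G) (s : Set G) :
    s ∈ @nhds G (topF F) x ↔ {w | x * w ∈ s} ∈ F := by
  rw [nhds_topF h]; rfl

theorem contMul_topF {G : Type*} [Group G] {F : Filter G} (h : GoodF F) :
    @ContinuousMul G (topF F) _ := by
  letI := topF F
  refine ContinuousMul.of_nhds_one ?_ ?_ ?_
  · intro s hs
    rw [mem_nhds_topF h] at hs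
    obtain ⟨W, hW, hWW⟩ := h.mul _ hs
    refine Filter.mem_map.2 (Filter.mem_prod_iff.2 ⟨W, ?_, W, ?_, ?_⟩)
    · rw [mem_nhds_topF h]; simpa using hW
    · rw [mem_nhds_topF h]; simpa using hW
    · rintro ⟨a, b⟩ ⟨ha, hb⟩
      simpa using hWW a ha b hb
  · intro x
    rw [nhds_topF h, nhds_topF h]
    simp
  · intro x
    rw [nhds_topF h, nhds_topF h]
    ext s
    simp only [one_mul, Filter.map_id', Filter.mem_map]
    constructor
    · intro hs
      have := h.conj x⁻¹ _ hs
      refine Filter.mem_of_superset this ?_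
      intro w hw
      simpa [mul_assoc] using hw
    · intro hs
      have := h.conj x _ hs
      refine Filter.mem_of_superset this ?_
      intro w hw
      simpa [mul_assoc] using hw

theorem omega_sym {G : Type*} [Group G] [τ : TopologicalSpace G]
    (hTot : @OmegaNarrow G _ (τ ⊓ conjTop G τ)) (V : Set G) (hV : V ∈ 𝓝 (1 : G)) :
    ∃ A : Set G, A.Countable ∧ (∀ x : G, ∃ a ∈ A, a⁻¹ * x ∈ V ∧ x⁻¹ * a ∈ V) ∧
      (∀ x : G, ∃ a ∈ A, x * a⁻¹ ∈ V ∧ a * x⁻¹ ∈ V) := by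
  have hU : V ∩ V⁻¹ ∈ @nhds G (τ ⊓ conjTop G τ) 1 := by
    rw [nhds_inf]
    refine Filter.inter_mem_inf hV ?_
    unfold conjTop
    rw [nhds_induced]
    exact ⟨V, by simpa using hV, fun x hx => hx⟩
  obtain ⟨A, hA, h1, h2⟩ := hTot _ hU
  refine ⟨A, hA, ?_, ?_⟩
  · intro x
    have : x ∈ A * (V ∩ V⁻¹) := h1 ▸ mem_univ x
    obtain ⟨a, ha, v, hv, rfl⟩ := this
    refine ⟨a, ha, by simpa using hv.1, by simpa using hv.2⟩
  · intro x
    have : x ∈ (V ∩ V⁻¹) * A := h2 ▸ mem_univ x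
    obtain ⟨v, hv, a, ha, rfl⟩ := this
    refine ⟨a, ha, by simpa using hv.1, by simpa using hv.2⟩

theorem step_good {G : Type*} [Group G] [τ : TopologicalSpace G] [ContinuousMul G]
    (hTot : @OmegaNarrow G _ (τ ⊓ conjTop G τ)) (V : Set G) (hV : V ∈ 𝓝 (1 : G)) :
    ∃ S : Set (Set G), S.Countable ∧ (∀ W ∈ S, W ∈ 𝓝 (1 : G)) ∧
      (∃ W ∈ S, ∀ a ∈ W, ∀ b ∈ W, a * b ∈ V) ∧
      (∀ x : G, ∃ W ∈ S, ∀ w ∈ W, x * w * x⁻¹ ∈ V) := by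
  have hm : ∀ T ∈ 𝓝 (1 : G), ∃ W ∈ 𝓝 (1 : G), ∀ a ∈ W, ∀ b ∈ W, a * b ∈ T := by
    intro T hT
    obtain ⟨W, hWo, hW1, hW⟩ := exists_open_nhds_one_mul_subset hT
    exact ⟨W, hWo.mem_nhds hW1, fun a ha b hb => hW (mul_mem_mul ha hb)⟩
  obtain ⟨W, hW, hWV⟩ := hm V hV
  obtain ⟨T, hT, hTW⟩ := hm W hW
  have h1T : (1 : G) ∈ T := mem_of_mem_nhds hT
  obtain ⟨A, hA, -, hA2⟩ := omega_sym hTot T hT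
  have hc : ∀ a : G, {w | a * w * a⁻¹ ∈ T} ∈ 𝓝 (1 : G) := by
    intro a
    have hcont : Continuous fun w : G => a * w * a⁻¹ := by fun_prop
    have := hcont.tendsto 1
    simp only [mul_one, mul_inv_cancel] at this
    exact this hT
  refine ⟨insert W ((fun a => {w | a * w * a⁻¹ ∈ T}) '' A), (hA.image _).insert _, ?_, ?_, ?_⟩
  · rintro _ (rfl | ⟨a, -, rfl⟩)
    · exact hW
    · exact hc a
  · exact ⟨W, mem_insert _ _, hWV⟩
  · intro x
    obtain ⟨a, ha, h1, h2⟩ := hA2 x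
    refine ⟨_, mem_insert_of_mem _ ⟨a, ha, rfl⟩, ?_⟩
    intro w hw
    have e1 := hTW _ h1 _ hw
    have e2 := hTW _ h2 1 h1T
    have e3 := hWV _ e1 _ e2
    simpa [mul_assoc] using e3

theorem exists_goodF {G : Type*} [Group G] [τ : TopologicalSpace G] [ContinuousMul G]
    (hTot : @OmegaNarrow G _ (τ ⊓ conjTop G τ)) (C0 : Set (Set G)) (hC0 : C0.Countable)
    (hC0' : ∀ V ∈ C0, V ∈ 𝓝 (1 : G)) :
    ∃ F : Filter G, F.IsCountablyGenerated ∧ 𝓝 1 ≤ F ∧ (∀ V ∈ C0, V ∈ F) ∧ GoodF F := by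
  choose! S hSc hSn hSm hSx using fun V hV => step_good hTot V hV
  let D : ℕ → Set (Set G) := fun n => Nat.rec C0 (fun _ E => ⋃ V ∈ E, S V) n
  have hD0 : D 0 = C0 := rfl
  have hDs : ∀ n, D (n + 1) = ⋃ V ∈ D n, S V := fun n => rfl
  have hDn : ∀ n, ∀ V ∈ D n, V ∈ 𝓝 (1 : G) := by
    intro n
    induction n with
    | zero => exact hC0'
    | succ n ih =>
      intro V hV
      rw [hDs] at hV
      simp only [mem_iUnion] at hV
      obtain ⟨T, hT, hVT⟩ := hV
      exact hSn T (ih T hT) V hVT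
  have hDc : ∀ n, (D n).Countable := by
    intro n
    induction n with
    | zero => exact hC0
    | succ n ih =>
      rw [hDs]
      exact ih.biUnion fun V hV => hSc V (hDn n V hV)
  have hnext : ∀ V ∈ ⋃ n, D n, S V ⊆ ⋃ n, D n := by
    intro V hV W hW
    obtain ⟨n, hn⟩ := mem_iUnion.1 hV
    refine mem_iUnion.2 ⟨n + 1, ?_⟩
    rw [hDs]
    exact mem_biUnion hn hW
  have hEn : ∀ V ∈ ⋃ n, D n, V ∈ 𝓝 (1 : G) := by
    intro V hV
    obtain ⟨n, hn⟩ := mem_iUnion.1 hV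
    exact hDn n V hn
  have hle : 𝓝 (1 : G) ≤ Filter.generate (⋃ n, D n) := Filter.le_generate_iff.2 hEn
  have hmem : ∀ V ∈ ⋃ n, D n, V ∈ Filter.generate (⋃ n, D n) :=
    fun V hV => Filter.mem_generate_of_mem hV
  refine ⟨Filter.generate (⋃ n, D n), ⟨⟨_, countable_iUnion hDc, rfl⟩⟩, hle, ?_, ?_, ?_, ?_⟩
  · intro V hV
    exact hmem V (mem_iUnion.2 ⟨0, hV⟩)
  · intro V hV
    exact mem_of_mem_nhds (hle hV)
  · intro V hV
    induction hV with
    | basic hs =>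
      obtain ⟨W, hW, h⟩ := hSm _ (hEn _ hs)
      exact ⟨W, hmem W (hnext _ hs hW), h⟩
    | univ => exact ⟨univ, Filter.univ_mem, fun _ _ _ _ => mem_univ _⟩
    | superset _ hst ih =>
      obtain ⟨W, hW, h⟩ := ih
      exact ⟨W, hW, fun a ha b hb => hst (h a ha b hb)⟩
    | inter _ _ ih1 ih2 =>
      obtain ⟨W, hW, h⟩ := ih1
      obtain ⟨W', hW', h'⟩ := ih2
      exact ⟨W ∩ W', Filter.inter_mem hW hW',
        fun a ha b hb => ⟨h a ha.1 b hb.1, h' a ha.2 b hb.2⟩⟩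
  · intro x
    have ht : Filter.map (fun w => x * w * x⁻¹) (Filter.generate (⋃ n, D n)) ≤
        Filter.generate (⋃ n, D n) := by
      refine Filter.le_generate_iff.2 ?_
      intro V hV
      obtain ⟨W, hW, h⟩ := hSx _ (hEn _ hV) x
      exact Filter.mem_map.2 (Filter.mem_of_superset (hmem W (hnext _ hV hW)) h)
    intro V hV
    exact ht hV

theorem secondCountable_topF {G : Type*} [Group G] {F : Filter G} (h : GoodF F)
    (hF : F.IsCountablyGenerated)
    (hA : ∀ V ∈ F, ∃ A : Set G, A.Countable ∧ (∀ x : G, ∃ a ∈ A, a⁻¹ * x ∈ V ∧ x⁻¹ * a ∈ V)) :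
    @SecondCountableTopology G (topF F) := by
  letI := topF F
  obtain ⟨U, hU⟩ := F.exists_antitone_basis
  have hUm : ∀ n, U n ∈ F := fun n => hU.1.mem_of_mem trivial
  choose A hAc hAx using fun n => hA (U n) (hUm n)
  let B : Set (Set G) :=
    (fun p : G × ℕ => interior {g | p.1⁻¹ * g ∈ U p.2}) '' ((⋃ n, A n) ×ˢ (univ : Set ℕ))
  have hB : IsTopologicalBasis B := by
    refine isTopologicalBasis_of_isOpen_of_nhds ?_ ?_
    · rintro _ ⟨p, -, rfl⟩
      exact isOpen_interior
    · intro x O hx hO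
      have hO' := (mem_nhds_topF h x O).1 (hO.mem_nhds hx)
      obtain ⟨V, hV, hVV⟩ := h.mul _ hO'
      obtain ⟨n, -, hn⟩ := hU.1.mem_iff.1 hV
      obtain ⟨W, hW, hWW⟩ := h.mul _ (hUm n)
      obtain ⟨m, -, hm⟩ := hU.1.mem_iff.1 hW
      obtain ⟨a, ha, ha1, ha2⟩ := hAx m x
      refine ⟨_, ⟨(a, n), ⟨mem_iUnion.2 ⟨m, ha⟩, mem_univ _⟩, rfl⟩, ?_, ?_⟩
      · rw [mem_interior_iff_mem_nhds, mem_nhds_topF h]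
        refine Filter.mem_of_superset hW ?_
        intro w hw
        have := hWW _ (hm ha1) w hw
        simpa [mul_assoc] using this
      · intro g hg
        have hg' := interior_subset hg
        have h1 : x⁻¹ * a ∈ U n := by simpa using hWW _ (hm ha2) 1 (h.one _ hW)
        have := hVV _ (hn h1) _ (hn hg')
        simpa [mul_assoc] using this
  refine hB.secondCountableTopology ?_
  exact ((countable_iUnion hAc).prod countable_univ).image _

/-- closure filter -/
def clF {G : Type*} [Group G] (F : Filter G) : Filter G :=
  F.lift' (fun s => @closure G (topF F) s)

theorem mem_clF {G : Type*} [Group G] {F : Filter G} (s : Set G) :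
    s ∈ clF F ↔ ∃ V ∈ F, @closure G (topF F) V ⊆ s := by
  unfold clF
  rw [Filter.mem_lift'_sets]
  intro a b hab
  exact @closure_mono G (topF F) _ _ hab

theorem le_clF {G : Type*} [Group G] (F : Filter G) : F ≤ clF F := by
  intro s hs
  obtain ⟨V, hV, h⟩ := (mem_clF s).1 hs
  exact Filter.mem_of_superset hV (Subset.trans (@subset_closure G (topF F) V) h)

theorem goodF_clF {G : Type*} [Group G] {F : Filter G} (h : GoodF F) : GoodF (clF F) := by
  letI := topF F
  haveI := contMul_topF h
  refine ⟨?_, ?_, ?_⟩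
  · intro V hV
    exact h.one _ (le_clF F hV)
  · intro V hV
    obtain ⟨W, hW, hWV⟩ := (mem_clF V).1 hV
    obtain ⟨T, hT, hTT⟩ := h.mul _ hW
    refine ⟨closure T, (mem_clF _).2 ⟨T, hT, Subset.rfl⟩, ?_⟩
    intro a ha b hb
    exact hWV (map_mem_closure₂ continuous_mul ha hb hTT)
  · intro x V hV
    obtain ⟨W, hW, hWV⟩ := (mem_clF V).1 hV
    refine (mem_clF _).2 ⟨_, h.conj x W hW, ?_⟩
    intro a ha
    refine hWV ?_
    have hc : Continuous fun w : G => x * w * x⁻¹ := by fun_prop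
    exact map_mem_closure (f := fun w : G => x * w * x⁻¹) hc ha (fun w hw => hw)

theorem clF_open {G : Type*} [Group G] {F : Filter G} (h : GoodF F) (C : Set G)
    (hC : @IsClosed G (topF F) C) : @IsOpen G (topF (clF F)) (@interior G (topF F) C) := by
  rw [@isOpen_iff_mem_nhds G (topF (clF F))]
  intro y hy
  rw [mem_nhds_topF (goodF_clF h)]
  letI := topF F
  haveI := contMul_topF h
  have h1 := mem_interior_iff_mem_nhds.1 hy
  rw [mem_nhds_topF h] at h1
  obtain ⟨V, hV, hVV⟩ := h.mul _ h1
  refine (mem_clF _).2 ⟨V, hV, ?_⟩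
  intro z hz
  show y * z ∈ interior C
  rw [mem_interior_iff_mem_nhds, mem_nhds_topF h]
  refine Filter.mem_of_superset hV ?_
  intro v hv
  show y * z * v ∈ C
  rw [← hC.closure_eq]
  have hc : Continuous fun w : G => y * w * v := by fun_prop
  refine map_mem_closure (f := fun w : G => y * w * v) hc hz ?_
  intro w hw
  simpa [mul_assoc] using hVV w hw v hv

theorem regular_clF {G : Type*} [Group G] {F : Filter G} (h : GoodF F) :
    @RegularSpace G (topF (clF F)) := by
  have hg := goodF_clF h
  have key : ∀ W : Set G, @IsOpen G (topF F) W →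
      @IsClosed G (topF (clF F)) (@closure G (topF F) W) := by
    intro W hW
    have := clF_open h Wᶜ (@IsOpen.isClosed_compl G (topF F) W hW)
    rw [@interior_compl G (topF F)] at this
    exact (@isOpen_compl_iff G _ (topF (clF F))).1 this
  letI := topF (clF F)
  haveI := contMul_topF hg
  refine RegularSpace.of_exists_mem_nhds_isClosed_subset ?_
  intro x s hs
  rw [mem_nhds_topF hg] at hs
  obtain ⟨V, hV, hVs⟩ := (mem_clF _).1 hs
  have hint : @interior G (topF F) V ∈ F := by
    have h1 : V ∈ @nhds G (topF F) 1 := by rw [mem_nhds_topF h]; simpa using hV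
    have h2 := (@interior_mem_nhds G (topF F) _ _).2 h1
    rw [mem_nhds_topF h] at h2
    simpa using h2
  refine ⟨(fun g => x⁻¹ * g) ⁻¹' (@closure G (topF F) (@interior G (topF F) V)), ?_, ?_, ?_⟩
  · rw [mem_nhds_topF hg]
    refine (mem_clF _).2 ⟨_, hint, ?_⟩
    intro z hz
    simpa using hz
  · exact (key _ (@isOpen_interior G (topF F) V)).preimage (by fun_prop)
  · intro g hg'
    have := hVs ((@closure_mono G (topF F) _ _ (@interior_subset G (topF F) V)) hg')
    simpa using this

theorem toType {G : Type*} [Group G] [TopologicalSpace G] [ContinuousMul G] [RegularSpace G]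
    [SecondCountableTopology G] :
    ∃ (H : Type) (gH : Group H) (tH : TopologicalSpace H),
      letI := gH
      letI := tH
      ContinuousMul H ∧ SeparableSpace H ∧ MetrizableSpace H ∧
        ∃ π : G →* H, Continuous π ∧ Surjective π ∧ ∀ x y, π x = π y → Inseparable x y := by
  let Q := SeparationQuotient G
  letI gQ : Group Q := groupOfIsUnit (by
    intro a
    obtain ⟨g, rfl⟩ := SeparationQuotient.surjective_mk a
    exact (Group.isUnit g).map (SeparationQuotient.mkMonoidHom (M := G)))
  haveI : ContinuousMul Q := inferInstanceAs (ContinuousMul (SeparationQuotient G))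
  haveI : SecondCountableTopology Q :=
    SeparationQuotient.isQuotientMap_mk.secondCountableTopology SeparationQuotient.isOpenMap_mk
  haveI : T3Space Q := inferInstanceAs (T3Space (SeparationQuotient G))
  haveI : MetrizableSpace Q := metrizableSpace_of_t3_secondCountable Q
  have hsmall : Small.{0} Q := by
    let B := countableBasis Q
    haveI : Countable B := (countable_countableBasis Q).to_subtype
    haveI : Small.{0} B := inferInstance
    refine small_of_injective (β := Set B) (f := fun x => {b | x ∈ b.1}) ?_
    intro x y hxy
    refine ((isBasis_countableBasis Q).inseparable_iff.2 ?_).eq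
    intro s hs
    have := Set.ext_iff.1 hxy ⟨s, hs⟩
    exact this
  let e : Shrink.{0} Q ≃ Q := (equivShrink Q).symm
  letI gH : Group (Shrink.{0} Q) := e.group
  letI tH : TopologicalSpace (Shrink.{0} Q) := TopologicalSpace.induced e inferInstance
  have hi : IsInducing e := ⟨rfl⟩
  let m : Shrink.{0} Q ≃* Q := e.mulEquiv
  haveI : ContinuousMul (Shrink.{0} Q) := hi.continuousMul m
  let φ : Shrink.{0} Q ≃ₜ Q := e.toHomeomorphOfIsInducing hi
  haveI : SecondCountableTopology (Shrink.{0} Q) := hi.secondCountableTopology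
  haveI : MetrizableSpace (Shrink.{0} Q) := φ.isEmbedding.metrizableSpace
  let p : G →* Q := SeparationQuotient.mkMonoidHom (M := G)
  refine ⟨Shrink.{0} Q, gH, tH, inferInstance, inferInstance, inferInstance,
    m.symm.toMonoidHom.comp p, ?_, ?_, ?_⟩
  · exact φ.symm.continuous.comp SeparationQuotient.continuous_mk
  · exact m.symm.surjective.comp SeparationQuotient.surjective_mk
  · intro x y hxy
    exact SeparationQuotient.mk_eq_mk.1 (m.symm.injective hxy)

theorem dense_lemma {G : Type*} [Group G] [τ : TopologicalSpace G] [ContinuousMul G]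
    (hWL : WeaklyLindelof G) (f : G → ℝ) (hf : Continuous f) (ε : ℝ) (hε : 0 < ε) :
    ∃ C : Set (Set G), C.Countable ∧ (∀ V ∈ C, V ∈ 𝓝 (1 : G)) ∧
      Dense {g : G | ∃ V ∈ C, ∃ c, c⁻¹ * g ∈ V ∧ ∀ v ∈ V, ∀ w ∈ V, |f (c * v * w) - f c| < ε} := by
  have h1 : ∀ x : G, ∃ V : Set G, IsOpen V ∧ 1 ∈ V ∧
      ∀ v ∈ V, ∀ w ∈ V, |f (x * v * w) - f x| < ε := by
    intro x
    have hc : Continuous fun p : G × G => |f (x * p.1 * p.2) - f x| := by fun_prop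
    have ho : IsOpen {p : G × G | |f (x * p.1 * p.2) - f x| < ε} := isOpen_lt hc continuous_const
    have hm : ((1 : G), (1 : G)) ∈ {p : G × G | |f (x * p.1 * p.2) - f x| < ε} := by simpa using hε
    obtain ⟨u, v, hu, hv, h1u, h1v, huv⟩ := isOpen_prod_iff.1 ho 1 1 hm
    exact ⟨u ∩ v, hu.inter hv, ⟨h1u, h1v⟩, fun a ha b hb => huv (mk_mem_prod ha.1 hb.2)⟩
  choose V hVo hV1 hVf using h1
  obtain ⟨𝒱, h𝒱, h𝒱c, h𝒱d⟩ := hWL (range fun x => (fun g => x⁻¹ * g) ⁻¹' V x)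
    (by
      rintro _ ⟨x, rfl⟩
      exact (hVo x).preimage (by fun_prop))
    (by
      refine eq_univ_of_forall fun x => ?_
      exact ⟨_, ⟨x, rfl⟩, by simpa using hV1 x⟩)
  have h𝒱' : ∀ s ∈ 𝒱, ∃ x : G, (fun g => x⁻¹ * g) ⁻¹' V x = s := fun s hs => h𝒱 hs
  choose! c hc using h𝒱'
  refine ⟨(fun s => V (c s)) '' 𝒱, h𝒱c.image _, ?_, h𝒱d.mono ?_⟩
  · rintro _ ⟨s, -, rfl⟩
    exact (hVo _).mem_nhds (hV1 _)
  · rintro g ⟨s, hs, hg⟩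
    refine ⟨_, ⟨s, hs, rfl⟩, c s, ?_, hVf (c s)⟩
    rw [← hc s hs] at hg
    exact hg

theorem statement5 (G : Type*) [gG : Group G] [τ : TopologicalSpace G] [ContinuousMul G]
    (hWL : WeaklyLindelof G)
    (hTot : @OmegaNarrow G gG (τ ⊓ conjTop G τ)) :
    SimplySMFactorizablePara G := by
  rintro U ⟨f, hf, rfl⟩
  choose C hCc hCn hCd using fun n : ℕ => dense_lemma hWL f hf (1 / ((n : ℝ) + 1)) (by positivity)
  obtain ⟨F, hFc, hFle, hCF, hF⟩ := exists_goodF hTot (⋃ n, C n) (countable_iUnion hCc)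
    (by intro V hV; obtain ⟨n, hn⟩ := mem_iUnion.1 hV; exact hCn n V hn)
  have hg := goodF_clF hF
  -- points with the same image have the same value
  have key : ∀ x y : G, @Inseparable G (topF (clF F)) x y → f x = f y := by
    intro x y hxy
    by_contra hne
    obtain ⟨n, hn⟩ := exists_nat_one_div_lt (show 0 < |f x - f y| / 8 by
      have := abs_pos.2 (sub_ne_zero.2 hne); positivity)
    set ε : ℝ := 1 / ((n : ℝ) + 1) with hεdef
    have hε : 0 < ε := by positivity
    let P : ℝ → Set G := fun t => @interior G (topF F) {g | |f g - t| < 4 * ε}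
    have hPo : ∀ s : Set G, @IsOpen G (topF F) s → IsOpen s := by
      intro s hs
      rw [isOpen_iff_mem_nhds]
      intro a ha
      have := (mem_nhds_topF hF a s).1 (@IsOpen.mem_nhds G (topF F) _ _ hs ha)
      have h2 := hFle this
      have hc : Filter.Tendsto (fun g : G => a⁻¹ * g) (𝓝 a) (𝓝 1) := by
        have : Continuous fun g : G => a⁻¹ * g := by fun_prop
        simpa using this.tendsto a
      simpa using hc h2
    have hP : ∀ t : ℝ, ∀ O : Set G, IsOpen O → (∃ g ∈ O, |f g - t| < ε) → (O ∩ P t).Nonempty := by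
      rintro t O hO ⟨g0, hg0, hg0t⟩
      have hc : Continuous fun g : G => |f g - t| := by fun_prop
      obtain ⟨g, ⟨hgO, hgt⟩, V, hV, c, hcg, hVf⟩ := (hCd n).inter_open_nonempty
        (O ∩ {g | |f g - t| < ε}) (hO.inter (isOpen_lt hc continuous_const)) ⟨g0, hg0, hg0t⟩
      have hVF : V ∈ F := hCF V (mem_iUnion.2 ⟨n, hV⟩)
      refine ⟨g, hgO, ?_⟩
      show g ∈ @interior G (topF F) _
      rw [@mem_interior_iff_mem_nhds G (topF F), mem_nhds_topF hF]
      refine Filter.mem_of_superset hVF ?_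
      intro v hv
      have e1 := hVf _ hcg v hv
      have e2 := hVf _ hcg 1 (hF.one _ hVF)
      simp only [mul_inv_cancel_left, mul_one] at e1 e2
      simp only [mem_ofPred_eq] at hgt ⊢
      rw [← hεdef] at e1 e2
      rw [abs_lt] at *
      constructor <;> linarith [e1.1, e1.2, e2.1, e2.2, hgt.1, hgt.2]
    let P' : Set G := @interior G (topF F) (@closure G (topF F) (P (f x)))
    have hP'o : @IsOpen G (topF (clF F)) P' :=
      clF_open hF _ (@isClosed_closure G (topF F) _)
    have hPP' : P (f x) ⊆ P' := @interior_maximal G (topF F) _ _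
      (@subset_closure G (topF F) _) (@isOpen_interior G (topF F) _)
    have hP'τ : IsOpen P' := hPo _ (@isOpen_interior G (topF F) _)
    have hinv : ∀ p ∈ P', p * (x⁻¹ * y) ∈ P' := by
      intro p hp
      letI := topF (clF F)
      haveI := contMul_topF hg
      have hc : Continuous fun g : G => p * x⁻¹ * g := by fun_prop
      have h1 := hxy.map hc
      have h2 := (h1.mem_open_iff hP'o).1 (by simpa using hp)
      simpa [mul_assoc] using h2
    -- find a suitable point near y
    let O : Set G := {g | |f g - f y| < ε}
    have hO : IsOpen O := isOpen_lt (by fun_prop) continuous_const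
    have hc : Continuous fun g : G => g * (x⁻¹ * y) := by fun_prop
    obtain ⟨p, hpO, hpP⟩ := hP (f x) _ (hO.preimage hc) ⟨x, by simp [O, hε], by simpa using hε⟩
    have hp2 := hinv p (hPP' hpP)
    obtain ⟨q, ⟨hqO, hqP'⟩, hqQ⟩ := hP (f y) (O ∩ P') (hO.inter hP'τ) ⟨_, ⟨hpO, hp2⟩, hpO⟩
    have hqcl := @interior_subset G (topF F) _ _ hqP'
    obtain ⟨r, hrQ, hrP⟩ := (@mem_closure_iff G (topF F) _ _).1 hqcl _
      (@isOpen_interior G (topF F) _) hqQ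
    have r1 := @interior_subset G (topF F) _ _ hrQ
    have r2 := @interior_subset G (topF F) _ _ hrP
    simp only [mem_ofPred_eq] at r1 r2
    have := abs_sub_le (f x) (f r) (f y)
    rw [abs_sub_comm (f x) (f r)] at this
    linarith
  have hcg : (clF F).IsCountablyGenerated := by
    obtain ⟨U, hU⟩ := F.exists_antitone_basis
    exact (hU.1.lift' (fun a b hab => @closure_mono G (topF F) _ _ hab)).isCountablyGenerated
  have hle : 𝓝 (1 : G) ≤ clF F := hFle.trans (le_clF F)
  have hsc := secondCountable_topF hg hcg (by
    intro V hV
    obtain ⟨A, hA, h1, -⟩ := omega_sym hTot V (hle hV)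
    exact ⟨A, hA, h1⟩)
  obtain ⟨H, gH, tH, h1, h2, h3, π, hπc, hπs, hπ⟩ :=
    @toType G _ (topF (clF F)) (contMul_topF hg) (regular_clF hF) hsc
  refine ⟨H, gH, tH, h1, h2, h3, π, ?_, hπs, ?_⟩
  · have hτ : τ ≤ topF (clF F) := by
      rw [TopologicalSpace.le_def]
      intro s hs
      rw [isOpen_iff_mem_nhds]
      intro a ha
      have := (mem_nhds_topF hg a s).1 (@IsOpen.mem_nhds G (topF (clF F)) _ _ hs ha)
      have h2 := hle this
      have hc : Filter.Tendsto (fun g : G => a⁻¹ * g) (𝓝 a) (𝓝 1) := by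
        have : Continuous fun g : G => a⁻¹ * g := by fun_prop
        simpa using this.tendsto a
      simpa using hc h2
    exact continuous_le_dom hτ hπc
  · refine Subset.antisymm ?_ (subset_preimage_image _ _)
    rintro y ⟨x, hx, hxy⟩
    have := key x y (hπ x y hxy)
    simp only [mem_preimage, mem_ofPred_eq] at hx ⊢
    rwa [← this]
end

section
/- Let G be a regular simply sm-factorizable paratopological group with topology τ, and let G* be the associated topological group, i.e., G with the topology τ* = τ ∨ τ⁻¹. Then the index of narrowness of G* is at most 𝔠 = 2^ω: for every neighborhood U of the identity in G* there is a set A ⊆ G with |A| ≤ 𝔠 and A·U = U·A = G. Consequently, every pairwise disjoint family of nonempty open subsets of G has cardinality at most 2^𝔠. -/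
open Topology TopologicalSpace Pointwise Function Set

theorem closure_mul_subset_aux {G : Type*} [Group G] [TopologicalSpace G] [ContinuousMul G]
    (A W : Set G) : closure A * W ⊆ closure (A * W) := by
  rintro _ ⟨a, ha, w, hw, rfl⟩
  exact map_mem_closure (f := fun y => y * w) (by fun_prop) ha
    (fun y hy => Set.mul_mem_mul hy hw)

theorem exists_sq_aux {G : Type*} [Group G] [TopologicalSpace G] [ContinuousMul G]
    (W : Set G) (hW : IsOpen W) (h1 : (1 : G) ∈ W) :
    ∃ V : Set G, IsOpen V ∧ (1 : G) ∈ V ∧ V * V ⊆ W := by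
  obtain ⟨V, hV, h, hs⟩ := exists_open_nhds_one_mul_subset (hW.mem_nhds h1)
  exact ⟨V, hV, h, hs⟩

theorem subset_mul_aux {G : Type*} [Group G] (A W : Set G) (h : (1 : G) ∈ W) : A ⊆ A * W :=
  fun a ha => ⟨a, ha, 1, h, mul_one a⟩

/-- Banakh–Ravsky: regular paratopological groups are completely regular (at the identity). -/
theorem exists_cozero_aux {G : Type*} [Group G] [TopologicalSpace G] [ContinuousMul G]
    [T1Space G] [RegularSpace G] (O : Set G) (hO : O ∈ 𝓝 (1 : G)) :
    ∃ V : Set G, IsCozero V ∧ (1 : G) ∈ V ∧ V ⊆ O := by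
  let P : Set G → Set G → Prop := fun c u =>
    ∃ W : Set G, IsOpen W ∧ (1 : G) ∈ W ∧ closure (c * W) ⊆ u
  have hP : ∀ {c u : Set G}, IsClosed c → P c u → IsOpen u → c ⊆ u →
      ∃ v : Set G, IsOpen v ∧ c ⊆ v ∧ closure v ⊆ u ∧ P c v ∧ P (closure v) u := by
    rintro c u - ⟨W, hW, h1, hWu⟩ - -
    obtain ⟨W', hW', h1', hs'⟩ := exists_sq_aux W hW h1
    obtain ⟨W'', hW'', h1'', hs''⟩ := exists_sq_aux W' hW' h1'
    have hv : closure (interior (closure (c * W'))) ⊆ closure (c * W') :=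
      closure_minimal interior_subset isClosed_closure
    have hsub : closure (interior (closure (c * W'))) * W' ⊆ closure (c * W) :=
      (Set.mul_subset_mul_right hv).trans <| (closure_mul_subset_aux _ _).trans <|
        closure_mono (by rw [mul_assoc]; exact Set.mul_subset_mul_left hs')
    have hP2 : closure (closure (interior (closure (c * W'))) * W') ⊆ u :=
      (closure_minimal hsub isClosed_closure).trans hWu
    refine ⟨interior (closure (c * W')), isOpen_interior, ?_, ?_, ⟨W'', hW'', h1'', ?_⟩,
      ⟨W', hW', h1', hP2⟩⟩
    · exact (subset_mul_aux c W' h1').trans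
        (interior_maximal subset_closure hW'.mul_left)
    · exact (subset_mul_aux _ W' h1').trans (subset_closure.trans hP2)
    · refine (subset_mul_aux _ W'' h1'').trans (interior_maximal ?_ hW''.mul_left)
      refine (closure_mul_subset_aux _ _).trans (closure_mono ?_)
      rw [mul_assoc]; exact Set.mul_subset_mul_left hs''
  obtain ⟨C, hC, hCc, hCO⟩ := exists_mem_nhds_isClosed_subset (interior_mem_nhds.2 hO)
  let c : Urysohns.CU P :=
    { C := {1}
      U := interior O
      P_C_U := ⟨interior C, isOpen_interior, mem_interior_iff_mem_nhds.2 hC, by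
        rw [Set.singleton_mul]
        simp only [one_mul, Set.image_id']
        exact (closure_minimal interior_subset hCc).trans hCO⟩
      closed_C := isClosed_singleton
      open_U := isOpen_interior
      subset := by
        rw [Set.singleton_subset_iff]
        exact mem_interior_iff_mem_nhds.2 hO
      hP := hP }
  refine ⟨(fun x => 1 - c.lim x) ⁻¹' {x : ℝ | x ≠ 0},
    ⟨_, continuous_const.sub c.continuous_lim, rfl⟩, ?_, ?_⟩
  · have : c.lim 1 = 0 := c.lim_of_mem_C 1 rfl
    simp [this]
  · intro x hx
    by_contra hxO
    have : c.lim x = 1 := c.lim_of_notMem_U x (fun h => hxO (interior_subset h))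
    simp [this] at hx

theorem mk_le_aux (H : Type) [TopologicalSpace H] [SeparableSpace H] [MetrizableSpace H] :
    Cardinal.mk H ≤ Cardinal.continuum := by
  letI := metrizableSpaceMetric H
  haveI := UniformSpace.secondCountable_of_separable H
  obtain ⟨b, hbc, -, hb⟩ := exists_countable_basis H
  have hinj : Function.Injective (fun x : H => {s : b | x ∈ (s : Set H)}) := by
    intro x y hxy
    apply Inseparable.eq
    rw [hb.inseparable_iff]
    intro s hs
    exact Set.ext_iff.1 hxy ⟨s, hs⟩
  refine (Cardinal.mk_le_of_injective hinj).trans ?_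
  rw [Cardinal.mk_set, ← Cardinal.two_power_aleph0]
  exact Cardinal.power_le_power_left two_ne_zero (Cardinal.le_aleph0_iff_set_countable.2 hbc)

theorem exists_kernel_aux {G : Type*} [Group G] [TopologicalSpace G] [ContinuousMul G]
    [T1Space G] [RegularSpace G] (hG : SimplySMFactorizablePara G)
    (O : Set G) (hO : O ∈ 𝓝 (1 : G)) :
    ∃ K : Subgroup G, K.Normal ∧ (K : Set G) ⊆ O ∧
      ∃ e : G → ℝ, ∀ x y, e x = e y ↔ x⁻¹ * y ∈ K := by
  obtain ⟨V, hV, h1, hVO⟩ := exists_cozero_aux O hO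
  obtain ⟨H, gH, tH, hm, hs, hmet, π, -, -, hπ⟩ := hG V hV
  letI := gH
  letI := tH
  have hc : Cardinal.mk H ≤ Cardinal.mk ℝ := by
    rw [Cardinal.mk_real]; exact mk_le_aux H
  obtain ⟨j⟩ := Cardinal.le_def _ _ |>.1 hc
  refine ⟨π.ker, inferInstance, ?_, fun x => j (π x), ?_⟩
  · intro x hx
    apply hVO
    rw [← hπ]
    exact ⟨1, h1, by rw [map_one]; exact (MonoidHom.mem_ker.1 hx).symm⟩
  · intro x y
    rw [j.injective.eq_iff, MonoidHom.mem_ker, map_mul, map_inv, inv_mul_eq_one]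

open Classical in
/-- An Erdős–Rado type tree argument. -/
theorem tree_aux {I : Type*} (c : I → I → ℝ)
    (hc : ∀ a b z, c a b = c a z → c z a = c z b → a = z) :
    Cardinal.mk I ≤ 2 ^ Cardinal.continuum := by
  rcases isEmpty_or_nonempty I with hI | hI
  · simp
  let W : Type := (Order.succ (Cardinal.continuum.{0})).ord.ToType
  have hW : Cardinal.mk W = Order.succ Cardinal.continuum := Cardinal.mk_ord_toType _
  have wf : WellFounded (fun a b : W => a < b) := wellFounded_lt
  -- the path determined by a code
  let F : (W → ℝ) → (α : W) → ((β : W) → β < α → I) → I := fun s α r =>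
    Classical.epsilon (fun i => ∀ β (h : β < α), c (r β h) i = s β)
  let J : (W → ℝ) → W → I := fun s => wf.fix (F s)
  have hJ : ∀ s α, J s α = Classical.epsilon (fun i => ∀ β < α, c (J s β) i = s β) := by
    intro s α
    exact wf.fix_eq (F s) α
  let F' : I → (α : W) → ((β : W) → β < α → I) → I := fun z α r =>
    Classical.epsilon (fun i => ∀ β (h : β < α), c (r β h) i = c (r β h) z)
  let J' : I → W → I := fun z => wf.fix (F' z)
  have hJ' : ∀ z α, J' z α =
      Classical.epsilon (fun i => ∀ β < α, c (J' z β) i = c (J' z β) z) := by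
    intro z α
    exact wf.fix_eq (F' z) α
  have hJ'' : ∀ z α, ∀ β < α, c (J' z β) (J' z α) = c (J' z β) z := by
    intro z α
    have := Classical.epsilon_spec (p := fun i => ∀ β < α, c (J' z β) i = c (J' z β) z)
      ⟨z, fun _ _ => rfl⟩
    rwa [← hJ'] at this
  have hex : ∀ z, ∃ α, J' z α = z := by
    intro z
    have hni : ¬ Function.Injective (fun α : W => c z (J' z α)) := by
      intro hinj
      have := Cardinal.mk_le_of_injective hinj
      rw [hW, Cardinal.mk_real] at this
      exact absurd this (not_le.2 (Order.lt_succ _))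
    rw [Function.not_injective_iff] at hni
    obtain ⟨α, β, hab, hne⟩ := hni
    rcases lt_or_gt_of_ne hne with h | h
    · exact ⟨α, hc _ _ _ (hJ'' z β α h) hab⟩
    · exact ⟨β, hc _ _ _ (hJ'' z α β h) hab.symm⟩
  let D : (Σ α : W, (Set.Iio α → ℝ)) → I := fun p =>
    J (fun β => if h : β < p.1 then p.2 ⟨β, h⟩ else 0) p.1
  have hD : Function.Surjective D := by
    intro z
    obtain ⟨α, hα⟩ := hex z
    refine ⟨⟨α, fun β => c (J' z β) z⟩, ?_⟩
    rw [← hα]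
    have key : ∀ β, β ≤ α →
        J (fun β => if h : β < α then c (J' z β) z else 0) β = J' z β := by
      intro β
      induction β using wf.induction with
      | _ β ih =>
        intro hβ
        rw [hJ, hJ']
        congr 1
        funext i
        apply propext
        refine forall₂_congr fun γ hγ => ?_
        rw [ih γ hγ (hγ.le.trans hβ), dif_pos (lt_of_lt_of_le hγ hβ)]
    have := key α le_rfl
    simp only [D]
    rw [hα] at this ⊢
    exact this
  have h1 := Cardinal.lift_mk_le_lift_mk_of_surjective hD
  have h2 : Cardinal.mk (Σ α : W, (Set.Iio α → ℝ)) ≤ 2 ^ Cardinal.continuum.{0} := by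
    rw [Cardinal.mk_sigma]
    have h3 : ∀ α : W, Cardinal.mk (Set.Iio α → ℝ) ≤ 2 ^ Cardinal.continuum.{0} := by
      intro α
      have h4 : Cardinal.mk (Set.Iio α) ≤ Cardinal.continuum :=
        Order.lt_succ_iff.1 (Cardinal.mk_Iio_toType_ord_lt α)
      rw [← Cardinal.power_def, Cardinal.mk_real]
      refine (Cardinal.power_le_power_left Cardinal.continuum_ne_zero h4).trans ?_
      rw [Cardinal.power_self_eq Cardinal.aleph0_le_continuum]
    refine (Cardinal.sum_le_sum _ _ h3).trans ?_
    rw [Cardinal.sum_const', hW]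
    have h5 : Order.succ Cardinal.continuum.{0} ≤ 2 ^ Cardinal.continuum.{0} :=
      Order.succ_le_of_lt (Cardinal.cantor _)
    refine (mul_le_mul_left h5 _).trans ?_
    rw [Cardinal.mul_eq_self]
    exact Cardinal.aleph0_le_continuum.trans (Cardinal.cantor _).le
  have h6 := h1.trans (Cardinal.lift_le.2 h2)
  simpa using h6

/-- The topological group associated to a regular simply sm-factorizable paratopological group
has index of narrowness at most 𝔠; consequently the cellularity of the group is at most 2^𝔠. -/
theorem statement18 (G : Type*) [gG : Group G] [τ : TopologicalSpace G] [ContinuousMul G]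
    [T1Space G] [RegularSpace G] (hG : SimplySMFactorizablePara G) :
    (∀ U ∈ @nhds G (τ ⊓ conjTop G τ) (1 : G),
      ∃ A : Set G, Cardinal.mk A ≤ Cardinal.continuum ∧
        A * U = Set.univ ∧ U * A = Set.univ) ∧
    ∀ 𝒰 : Set (Set G), (∀ U ∈ 𝒰, IsOpen U ∧ U.Nonempty) → 𝒰.PairwiseDisjoint id →
      Cardinal.mk 𝒰 ≤ 2 ^ Cardinal.continuum := by
  constructor
  · intro U hU
    rw [nhds_inf, conjTop, nhds_induced, inv_one, Filter.mem_inf_iff_superset] at hU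
    obtain ⟨V₁, hV₁, V₂, hV₂, hsub⟩ := hU
    obtain ⟨V₃, hV₃, hV₃₂⟩ := Filter.mem_comap.1 hV₂
    obtain ⟨K, hKn, hK, e, he⟩ := exists_kernel_aux hG (V₁ ∩ V₃) (Filter.inter_mem hV₁ hV₃)
    have hKU : (K : Set G) ⊆ U := fun x hx =>
      hsub ⟨(hK hx).1, hV₃₂ (hK (K.inv_mem hx)).2⟩
    let g : Set.range e → G := fun r => r.2.choose
    have hg : ∀ r, e (g r) = r := fun r => r.2.choose_spec
    refine ⟨Set.range g, ?_, ?_, ?_⟩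
    · have h1 := Cardinal.mk_range_le_lift (f := g)
      have h2 : Cardinal.mk (Set.range e) ≤ Cardinal.continuum := by
        rw [← Cardinal.mk_real]; exact Cardinal.mk_set_le _
      have h3 := h1.trans (Cardinal.lift_le.2 h2)
      simpa using h3
    · refine Set.eq_univ_of_forall fun x => ?_
      have h := (he (g ⟨e x, x, rfl⟩) x).1 (hg _)
      exact ⟨g ⟨e x, x, rfl⟩, ⟨_, rfl⟩, _, hKU h, by group⟩
    · refine Set.eq_univ_of_forall fun x => ?_
      have h := hKn.conj_mem _ ((he (g ⟨e x, x, rfl⟩) x).1 (hg _)) (g ⟨e x, x, rfl⟩)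
      exact ⟨_, hKU h, g ⟨e x, x, rfl⟩, ⟨_, rfl⟩, by group⟩
  · intro 𝒰 h𝒰 hdis
    have hx : ∀ i : 𝒰, ∃ x : G, x ∈ (i : Set G) := fun i => (h𝒰 i i.2).2
    choose x hx using hx
    have hk : ∀ i : 𝒰, ∃ K : Subgroup G, K.Normal ∧
        (K : Set G) ⊆ (fun y => x i * y) ⁻¹' (i : Set G) ∧
        ∃ e : G → ℝ, ∀ x y, e x = e y ↔ x⁻¹ * y ∈ K := fun i =>
      exists_kernel_aux hG _ (((h𝒰 i i.2).1.preimage (by fun_prop)).mem_nhds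
        (by simpa using hx i))
    choose K hKn hK e he using hk
    refine tree_aux (fun i j => e i (x j)) ?_
    intro a b z h1 h2
    rw [he] at h1 h2
    -- `h1 : (x b)⁻¹ * x z ∈ K a`, `h2 : (x a)⁻¹ * x b ∈ K z`
    by_contra hne
    have hd : Disjoint (a : Set G) (z : Set G) :=
      hdis a.2 z.2 (fun h => hne (Subtype.ext h))
    have h3 := (hKn a).conj_mem _ h1 ((x a)⁻¹ * x b)
    have m1 := hK a h3
    have m2 : x z * ((x a)⁻¹ * x b)⁻¹ ∈ (z : Set G) := hK z ((K z).inv_mem h2)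
    refine Set.disjoint_left.1 hd m1 ?_
    convert m2 using 1
    group
end
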